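/- arXiv:1801.03922 — 5 statements merged into one kernel-verified Lean document; each statement's English description precedes it below -/
import Mathlib

section
/- Let Λ be a finite metric space and let w assign a nonnegative real weight w(Q) to each subset Q ⊆ Λ, satisfying Σ_{Q∋x} w(Q)·|Q|²·exp(μ·diam(Q)) ≤ ζ for every x ∈ Λ, for some constants μ, ζ > 0. Then for arbitrary subsets P, S ⊆ Λ: Σ_{Q : P∼Q and Q∼S} w(Q) ≤ ζ·Σ_{p∈P} exp(−μ·dist(p,S)). -/
/-!
A set `Q` meeting both `P` and `S` contains some `p ∈ P` and some `s ∈ S`, so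
`dist(p,S) ≤ dist p s ≤ diam Q`; hence `w Q` is at most its weighted term
`w Q · |Q|² · exp(μ · diam Q)` times `exp(-μ · dist(p,S))` (`weight_le`). A union bound over
`p ∈ P`, an exchange of the two sums and the decay hypothesis at each `p` give the estimate.
-/

noncomputable section

open scoped BigOperators

namespace SetSums

variable {Λ : Type*} [Fintype Λ] [DecidableEq Λ] [MetricSpace Λ]

/-- Distance between two sets of sites: `dist(X,Y) = min_{x∈X, y∈Y} dist x y`. -/
def setDist (X Y : Set Λ) : ℝ := sInf (Set.image2 dist X Y)

/-- Here `|Q|² ≥ 1` because `p ∈ Q`, and `dist(p,S) ≤ diam Q` because `Q` meets `S` at `s`. -/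
lemma weight_le (w : Finset Λ → ℝ) (hw : ∀ Q, 0 ≤ w Q) {μ : ℝ} (hμ : 0 < μ)
    {Q S : Finset Λ} {p s : Λ} (hp : p ∈ Q) (hsQ : s ∈ Q) (hsS : s ∈ S) :
    w Q ≤ w Q * (Q.card : ℝ) ^ 2 * Real.exp (μ * Metric.diam (Q : Set Λ)) *
      Real.exp (-μ * Metric.infDist p (S : Set Λ)) := by
  have hdist : Metric.infDist p (S : Set Λ) ≤ Metric.diam (Q : Set Λ) :=
    (Metric.infDist_le_dist_of_mem (Finset.mem_coe.2 hsS)).trans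
      (Metric.dist_le_diam_of_mem Q.finite_toSet.isBounded
        (Finset.mem_coe.2 hp) (Finset.mem_coe.2 hsQ))
  have hcard : (1 : ℝ) ≤ (Q.card : ℝ) ^ 2 :=
    one_le_pow₀ (by exact_mod_cast Finset.card_pos.2 ⟨p, hp⟩)
  have hexp : 1 ≤ Real.exp (μ * Metric.diam (Q : Set Λ)) *
      Real.exp (-μ * Metric.infDist p (S : Set Λ)) := by
    rw [← Real.exp_add]
    exact Real.one_le_exp (by nlinarith)
  rw [mul_assoc, mul_assoc]
  exact le_mul_of_one_le_right (hw Q) (one_le_mul_of_one_le_of_one_le hcard hexp)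

/-- **Middle-sum estimate:** if `Σ_{Q∋x} w(Q)|Q|²e^{μ·diam Q} ≤ ζ` for all `x`, then
`Σ_{Q : P∼Q∼S} w(Q) ≤ ζ·Σ_{p∈P} e^{−μ·dist(p,S)}`. -/
theorem middle_sum_estimate
    (w : Finset Λ → ℝ) (hw : ∀ Q, 0 ≤ w Q)
    (μ ζ : ℝ) (hμ : 0 < μ) (hζ : 0 < ζ)
    (hdecay : ∀ x : Λ, ∑ Q ∈ Finset.univ.filter (fun Q : Finset Λ => x ∈ Q),
        w Q * (Q.card : ℝ) ^ 2 * Real.exp (μ * Metric.diam (Q : Set Λ)) ≤ ζ)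
    (P S : Finset Λ) :
    ∑ Q ∈ Finset.univ.filter
        (fun Q : Finset Λ => (P ∩ Q).Nonempty ∧ (Q ∩ S).Nonempty), w Q ≤
      ζ * ∑ p ∈ P, Real.exp (-μ * Metric.infDist p (S : Set Λ)) := by
  set f : Finset Λ → ℝ := fun Q =>
    w Q * (Q.card : ℝ) ^ 2 * Real.exp (μ * Metric.diam (Q : Set Λ)) with hf
  set e : Λ → ℝ := fun p => Real.exp (-μ * Metric.infDist p (S : Set Λ)) with he
  have hterm : ∀ Q p, 0 ≤ if p ∈ Q then f Q * e p else 0 := by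
    intro Q p
    have := hw Q
    split_ifs
    · positivity
    · exact le_rfl
  calc
    _ ≤ ∑ Q ∈ Finset.univ.filter
          (fun Q : Finset Λ => (P ∩ Q).Nonempty ∧ (Q ∩ S).Nonempty),
          ∑ p ∈ P, if p ∈ Q then f Q * e p else 0 := by
      refine Finset.sum_le_sum fun Q hQ => ?_
      obtain ⟨-, ⟨p, hp⟩, ⟨s, hs⟩⟩ := Finset.mem_filter.1 hQ
      obtain ⟨hpP, hpQ⟩ := Finset.mem_inter.1 hp
      obtain ⟨hsQ, hsS⟩ := Finset.mem_inter.1 hs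
      refine le_trans ?_ (Finset.single_le_sum (fun p _ => hterm Q p) hpP)
      rw [if_pos hpQ]
      exact weight_le w hw hμ hpQ hsQ hsS
    _ ≤ ∑ Q : Finset Λ, ∑ p ∈ P, if p ∈ Q then f Q * e p else 0 :=
      Finset.sum_le_sum_of_subset_of_nonneg (Finset.filter_subset _ _)
        fun Q _ _ => Finset.sum_nonneg fun p _ => hterm Q p
    _ = ∑ p ∈ P, (∑ Q ∈ Finset.univ.filter (fun Q : Finset Λ => p ∈ Q), f Q) * e p := by
      rw [Finset.sum_comm]
      refine Finset.sum_congr rfl fun p _ => ?_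
      rw [Finset.sum_mul, Finset.sum_filter]
    _ ≤ ∑ p ∈ P, ζ * e p :=
      Finset.sum_le_sum fun p _ =>
        mul_le_mul_of_nonneg_right (hdecay p) (Real.exp_pos _).le
    _ = _ := (Finset.mul_sum _ _ _).symm

end SetSums
end
end

section
/- Let Λ be a finite metric space and let w assign a nonnegative real weight w(Q) to each subset Q ⊆ Λ, satisfying Σ_{Q∋x} w(Q)·|Q|²·exp(μ·diam(Q)) ≤ ζ for every x ∈ Λ, for some constants μ, ζ > 0. Then for arbitrary subsets P, S ⊆ Λ: Σ_{Q : P∼Q} w(Q)·|Q|²·exp(−μ·dist(Q,S)) ≤ ζ·Σ_{p∈P} exp(−μ·dist(p,S)). -/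
/-!
If `p ∈ Q`, the triangle inequality gives `dist(p,S) ≤ diam Q + dist(Q,S)`
(`infDist_le_diam_add_setDist`), hence
`e^{-μ dist(Q,S)} ≤ e^{μ diam Q} e^{-μ dist(p,S)}`. A union bound replaces the sum over the `Q`
meeting `P` by the double sum over `p ∈ P` and `Q ∋ p`, and for each fixed `p` the decay
hypothesis bounds the inner sum by `ζ e^{-μ dist(p,S)}`.
-/

noncomputable section

open scoped BigOperators

namespace SetSums

variable {Λ : Type*} [Fintype Λ] [DecidableEq Λ] [MetricSpace Λ]

/-- Triangle inequality through a point of `Q` nearest to `S`. For `S = ∅` both distances take the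
default value `0`, so the inequality still holds. -/
theorem infDist_le_diam_add_setDist {p : Λ} {Q S : Finset Λ} (hp : p ∈ Q) :
    Metric.infDist p (S : Set Λ) ≤
      Metric.diam (Q : Set Λ) + setDist (Q : Set Λ) (S : Set Λ) := by
  rcases S.eq_empty_or_nonempty with rfl | hS
  · simp [setDist, Metric.diam_nonneg]
  · rw [← sub_le_iff_le_add']
    refine le_csInf (Set.Nonempty.image2 ⟨p, hp⟩ hS) ?_
    rintro _ ⟨q, hq, s, hs, rfl⟩
    have h1 : Metric.infDist p (S : Set Λ) ≤ dist p s := Metric.infDist_le_dist_of_mem hs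
    have h2 : dist p q ≤ Metric.diam (Q : Set Λ) :=
      Metric.dist_le_diam_of_mem Q.finite_toSet.isBounded hp hq
    linarith [dist_triangle p q s]

/-- **Right-sum estimate:** if `Σ_{Q∋x} w(Q)|Q|²e^{μ·diam Q} ≤ ζ` for all `x`, then
`Σ_{Q : P∼Q} w(Q)|Q|²e^{−μ·dist(Q,S)} ≤ ζ·Σ_{p∈P} e^{−μ·dist(p,S)}`. -/
theorem right_sum_estimate
    (w : Finset Λ → ℝ) (hw : ∀ Q, 0 ≤ w Q)
    (μ ζ : ℝ) (hμ : 0 < μ) (hζ : 0 < ζ)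
    (hdecay : ∀ x : Λ, ∑ Q ∈ Finset.univ.filter (fun Q : Finset Λ => x ∈ Q),
        w Q * (Q.card : ℝ) ^ 2 * Real.exp (μ * Metric.diam (Q : Set Λ)) ≤ ζ)
    (P S : Finset Λ) :
    ∑ Q ∈ Finset.univ.filter (fun Q : Finset Λ => (P ∩ Q).Nonempty),
        w Q * (Q.card : ℝ) ^ 2 * Real.exp (-μ * setDist (Q : Set Λ) (S : Set Λ)) ≤
      ζ * ∑ p ∈ P, Real.exp (-μ * Metric.infDist p (S : Set Λ)) := by
  have key : ∀ p Q, p ∈ Q →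
      w Q * (Q.card : ℝ) ^ 2 * Real.exp (-μ * setDist (Q : Set Λ) (S : Set Λ)) ≤
        w Q * (Q.card : ℝ) ^ 2 * Real.exp (μ * Metric.diam (Q : Set Λ)) *
          Real.exp (-μ * Metric.infDist p (S : Set Λ)) := by
    intro p Q hp
    rw [mul_assoc _ (Real.exp _), ← Real.exp_add]
    refine mul_le_mul_of_nonneg_left (Real.exp_le_exp.2 ?_)
      (mul_nonneg (hw Q) (sq_nonneg _))
    nlinarith [infDist_le_diam_add_setDist (S := S) hp]
  have hnn : ∀ p Q, 0 ≤ w Q * (Q.card : ℝ) ^ 2 * Real.exp (μ * Metric.diam (Q : Set Λ)) *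
      Real.exp (-μ * Metric.infDist p (S : Set Λ)) := fun p Q =>
    mul_nonneg (mul_nonneg (mul_nonneg (hw Q) (sq_nonneg _)) (Real.exp_pos _).le)
      (Real.exp_pos _).le
  calc
    _ ≤ ∑ Q ∈ Finset.univ.filter (fun Q : Finset Λ => (P ∩ Q).Nonempty), ∑ p ∈ P,
          if p ∈ Q then w Q * (Q.card : ℝ) ^ 2 * Real.exp (μ * Metric.diam (Q : Set Λ)) *
            Real.exp (-μ * Metric.infDist p (S : Set Λ)) else 0 := by
        refine Finset.sum_le_sum fun Q hQ => ?_
        obtain ⟨p, hp⟩ := (Finset.mem_filter.1 hQ).2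
        obtain ⟨hpP, hpQ⟩ := Finset.mem_inter.1 hp
        refine (key p Q hpQ).trans ?_
        -- a single `p ∈ P ∩ Q` already contributes enough
        refine le_trans (le_of_eq ?_) (Finset.single_le_sum (fun p _ => ?_) hpP)
        · exact (if_pos hpQ).symm
        · split_ifs
          exacts [hnn p Q, le_rfl]
    _ ≤ ∑ Q : Finset Λ, ∑ p ∈ P,
          if p ∈ Q then w Q * (Q.card : ℝ) ^ 2 * Real.exp (μ * Metric.diam (Q : Set Λ)) *
            Real.exp (-μ * Metric.infDist p (S : Set Λ)) else 0 := by
        refine Finset.sum_le_sum_of_subset_of_nonneg (Finset.filter_subset _ _) fun Q _ _ =>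
          Finset.sum_nonneg fun p _ => ?_
        split_ifs
        exacts [hnn p Q, le_rfl]
    _ ≤ _ := by
        rw [Finset.sum_comm, Finset.mul_sum]
        refine Finset.sum_le_sum fun p _ => ?_
        rw [← Finset.sum_filter, ← Finset.sum_mul]
        exact mul_le_mul_of_nonneg_right (hdecay p) (Real.exp_pos _).le

end SetSums
end
end

section
/- Let Λ be a finite metric space and let w assign a nonnegative real weight w(Q) to each subset Q ⊆ Λ, satisfying Σ_{Q∋x} w(Q)·|Q|²·exp(μ·diam(Q)) ≤ ζ for every x ∈ Λ, for some constants μ, ζ > 0. Then for arbitrary subsets P, S ⊆ Λ: Σ_{Q,R : P∼Q, Q∼R, R∼S} w(Q)·w(R) ≤ ζ²·Σ_{p∈P} exp(−μ·dist(p,S)). -/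
/-!
The proof is a union bound applied twice. If `p ∈ P ∩ Q`, and `Q` meets `R`, and `R` meets `S`, then
`dist(p, S) ≤ diam Q + diam R`, so `1 ≤ e^{μ diam Q} e^{μ diam R} e^{-μ dist(p, S)}`
(`infDist_le_diam_add_diam`).

Fix `Q` and `p ∈ P ∩ Q`. Bounding the sum over the `R` that meet `Q` by a sum over `q ∈ Q` and
`R ∋ q` (`sum_le_sum_sum_mem`), the decay hypothesis at each `q` gives
`∑ R, w R ≤ |Q| ζ e^{μ diam Q} e^{-μ dist(p, S)}`. Bounding the sum over `Q` in the same way by a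
sum over `p ∈ P` and `Q ∋ p`, the decay hypothesis at `p` supplies the second factor `ζ`; the
factor `|Q|` from the inner step is absorbed by the weight `|Q|²`.
-/

noncomputable section

open scoped BigOperators

namespace SetSums

variable {Λ : Type*} [Fintype Λ] [DecidableEq Λ] [MetricSpace Λ]

/-- Union bound for sums: each `R ∈ T` meets `A`, so its term `f R` is dominated by the term
`g x R` for some `x ∈ A ∩ R`. -/
lemma sum_le_sum_sum_mem {X : Type*} [Fintype X] [DecidableEq X]
    (A : Finset X) (T : Finset (Finset X))
    (f : Finset X → ℝ) (g : X → Finset X → ℝ) (hg : ∀ x R, 0 ≤ g x R)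
    (hT : ∀ R ∈ T, (A ∩ R).Nonempty)
    (hfg : ∀ R ∈ T, ∀ x ∈ A, x ∈ R → f R ≤ g x R) :
    ∑ R ∈ T, f R ≤
      ∑ x ∈ A, ∑ R ∈ Finset.univ.filter (fun R : Finset X => x ∈ R), g x R := by
  have hterm : ∀ R ∈ T, f R ≤ ∑ x ∈ A, if x ∈ R then g x R else 0 := by
    intro R hR
    obtain ⟨x, hx⟩ := hT R hR
    obtain ⟨hxA, hxR⟩ := Finset.mem_inter.mp hx
    have hle := Finset.single_le_sum (f := fun x => if x ∈ R then g x R else 0)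
      (fun y _ => by split_ifs <;> simp [hg]) hxA
    simp only [hxR, if_true] at hle
    exact (hfg R hR x hxA hxR).trans hle
  calc ∑ R ∈ T, f R ≤ ∑ R ∈ T, ∑ x ∈ A, (if x ∈ R then g x R else 0) :=
        Finset.sum_le_sum hterm
    _ ≤ ∑ R, ∑ x ∈ A, (if x ∈ R then g x R else 0) :=
        Finset.sum_le_sum_of_subset_of_nonneg (Finset.subset_univ T)
          (fun R _ _ => Finset.sum_nonneg fun x _ => by split_ifs <;> simp [hg])
    _ = _ := by
        rw [Finset.sum_comm]
        simp only [Finset.sum_filter]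

lemma infDist_le_diam_add_diam {X : Type*} [DecidableEq X] [MetricSpace X]
    {Q R S : Finset X} {p : X} (hp : p ∈ Q)
    (hQR : (Q ∩ R).Nonempty) (hRS : (R ∩ S).Nonempty) :
    Metric.infDist p (S : Set X) ≤
      Metric.diam (Q : Set X) + Metric.diam (R : Set X) := by
  obtain ⟨q, hq⟩ := hQR
  obtain ⟨r, hr⟩ := hRS
  rw [Finset.mem_inter] at hq hr
  calc Metric.infDist p (S : Set X) ≤ dist p r :=
        Metric.infDist_le_dist_of_mem (Finset.mem_coe.mpr hr.2)
    _ ≤ dist p q + dist q r := dist_triangle p q r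
    _ ≤ _ := add_le_add
        (Metric.dist_le_diam_of_mem Q.finite_toSet.isBounded hp hq.1)
        (Metric.dist_le_diam_of_mem R.finite_toSet.isBounded hq.2 hr.1)

/-- **Double middle-sum estimate:** if `Σ_{Q∋x} w(Q)|Q|²e^{μ·diam Q} ≤ ζ` for all `x`, then
`Σ_{Q,R : P∼Q∼R∼S} w(Q)w(R) ≤ ζ²·Σ_{p∈P} e^{−μ·dist(p,S)}`. -/
theorem double_middle_sum_estimate
    (w : Finset Λ → ℝ) (hw : ∀ Q, 0 ≤ w Q)
    (μ ζ : ℝ) (hμ : 0 < μ) (hζ : 0 < ζ)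
    (hdecay : ∀ x : Λ, ∑ Q ∈ Finset.univ.filter (fun Q : Finset Λ => x ∈ Q),
        w Q * (Q.card : ℝ) ^ 2 * Real.exp (μ * Metric.diam (Q : Set Λ)) ≤ ζ)
    (P S : Finset Λ) :
    ∑ Q ∈ Finset.univ.filter (fun Q : Finset Λ => (P ∩ Q).Nonempty),
      ∑ R ∈ Finset.univ.filter
          (fun R : Finset Λ => (Q ∩ R).Nonempty ∧ (R ∩ S).Nonempty),
        w Q * w R ≤
      ζ ^ 2 * ∑ p ∈ P, Real.exp (-μ * Metric.infDist p (S : Set Λ)) := by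
  -- Since `1 ≤ |Q|` when `x ∈ Q`, the decay hypothesis also holds with weight `|Q|` or `1`.
  have hcard : ∀ (x : Λ) (Q : Finset Λ), x ∈ Q → (1 : ℝ) ≤ Q.card := fun x Q hx => by
    exact_mod_cast Finset.card_pos.mpr ⟨x, hx⟩
  have hdecay_one : ∀ x : Λ, ∑ Q ∈ Finset.univ.filter (fun Q : Finset Λ => x ∈ Q),
      w Q * (Q.card : ℝ) * Real.exp (μ * Metric.diam (Q : Set Λ)) ≤ ζ := fun x => by
    refine (Finset.sum_le_sum fun Q hQ => ?_).trans (hdecay x)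
    have h1 := hcard x Q (Finset.mem_filter.mp hQ).2
    have h2 := hw Q
    gcongr
    nlinarith
  have hdecay_zero : ∀ x : Λ, ∑ Q ∈ Finset.univ.filter (fun Q : Finset Λ => x ∈ Q),
      w Q * Real.exp (μ * Metric.diam (Q : Set Λ)) ≤ ζ := fun x => by
    refine (Finset.sum_le_sum fun Q hQ => ?_).trans (hdecay_one x)
    have h1 := hcard x Q (Finset.mem_filter.mp hQ).2
    have h2 := hw Q
    gcongr
    nlinarith
  have hinner : ∀ (Q : Finset Λ) (p : Λ), p ∈ Q →
      ∑ R ∈ Finset.univ.filter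
          (fun R : Finset Λ => (Q ∩ R).Nonempty ∧ (R ∩ S).Nonempty), w R ≤
        Q.card * (Real.exp (μ * Metric.diam (Q : Set Λ)) *
          Real.exp (-μ * Metric.infDist p (S : Set Λ)) * ζ) := by
    intro Q p hp
    refine (sum_le_sum_sum_mem Q _ w
      (fun _ R => Real.exp (μ * Metric.diam (Q : Set Λ)) *
          Real.exp (-μ * Metric.infDist p (S : Set Λ)) *
          (w R * Real.exp (μ * Metric.diam (R : Set Λ))))
      (fun _ R => ?_) (fun R hR => (Finset.mem_filter.mp hR).2.1) ?_).trans ?_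
    · have := hw R
      positivity
    · intro R hR q _ _
      obtain ⟨hQR, hRS⟩ := (Finset.mem_filter.mp hR).2
      have hd := mul_le_mul_of_nonneg_left (infDist_le_diam_add_diam hp hQR hRS) hμ.le
      have hexp : 1 ≤ Real.exp (μ * Metric.diam (Q : Set Λ)) *
          Real.exp (-μ * Metric.infDist p (S : Set Λ)) *
          Real.exp (μ * Metric.diam (R : Set Λ)) := by
        rw [← Real.exp_add, ← Real.exp_add, Real.one_le_exp_iff]
        linarith
      have := le_mul_of_one_le_right (hw R) hexp
      linarith
    · rw [← nsmul_eq_mul]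
      refine Finset.sum_le_card_nsmul _ _ _ fun q _ => ?_
      rw [← Finset.mul_sum]
      exact mul_le_mul_of_nonneg_left (hdecay_zero q) (by positivity)
  simp only [← Finset.mul_sum]
  refine (sum_le_sum_sum_mem P _ _
    (fun p Q => ζ * Real.exp (-μ * Metric.infDist p (S : Set Λ)) *
      (w Q * (Q.card : ℝ) * Real.exp (μ * Metric.diam (Q : Set Λ))))
    (fun p Q => ?_) (fun Q hQ => (Finset.mem_filter.mp hQ).2) ?_).trans ?_
  · have := hw Q
    positivity
  · intro Q _ p _ hpQ
    have := mul_le_mul_of_nonneg_left (hinner Q p hpQ) (hw Q)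
    linarith
  · rw [Finset.mul_sum]
    refine Finset.sum_le_sum fun p _ => ?_
    rw [← Finset.mul_sum]
    have := mul_le_mul_of_nonneg_left (hdecay_one p)
      (show 0 ≤ ζ * Real.exp (-μ * Metric.infDist p (S : Set Λ)) by positivity)
    linarith

end SetSums
end
end

section
/- Let Λ be a finite metric space and let w assign a nonnegative real weight w(Q) to each subset Q ⊆ Λ, satisfying Σ_{Q∋x} w(Q)·|Q|²·exp(μ·diam(Q)) ≤ ζ for every x ∈ Λ, for some constants μ, ζ > 0. Then for arbitrary subsets P, S ⊆ Λ: Σ_{Q,R : P∼Q, Q∼R} |Q∪R|·w(Q)·w(R)·exp(−μ·dist(Q∪R, S)) ≤ 2ζ²·Σ_{p∈P} exp(−μ·dist(p,S)). -/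
/-!
A site `p ∈ P ∩ Q` lies within `diam Q + diam R` of every site of `Q ∪ R` when `Q ∼ R`, so
`dist(p, S) ≤ diam Q + diam R + dist(Q ∪ R, S)` (`infDist_le_setDist_union`). Together with
`|Q ∪ R| ≤ 2 |Q| |R|²`, each summand is at most
`e^{-μ dist(p,S)} · 2 |Q| w(Q) e^{μ diam Q} · |R|² w(R) e^{μ diam R}`.
A sum over sets meeting a given set is bounded by the sum over the sites of that set
(`sum_meeting_le`). Hence the sum over `R ∼ Q` costs a factor `|Q| ζ`, which
turns `|Q|` into `|Q|²`, and the sum over `Q ∼ P` then gives a factor `ζ` for each `p ∈ P`.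
-/

noncomputable section

open scoped BigOperators

namespace SetSums

variable {Λ : Type*} [Fintype Λ] [DecidableEq Λ] [MetricSpace Λ]

/-- Union bound: a set meeting `A` contains at least one site of `A`. -/
lemma sum_meeting_le {Λ : Type*} [Fintype Λ] [DecidableEq Λ] (A : Finset Λ)
    (f : Finset Λ → ℝ) (hf : ∀ Q, 0 ≤ f Q) :
    ∑ Q ∈ Finset.univ.filter (fun Q : Finset Λ => (A ∩ Q).Nonempty), f Q ≤
      ∑ a ∈ A, ∑ Q ∈ Finset.univ.filter (fun Q : Finset Λ => a ∈ Q), f Q := by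
  simp only [Finset.sum_filter]
  rw [Finset.sum_comm]
  refine Finset.sum_le_sum fun Q _ => ?_
  have hnn : ∀ a ∈ A, 0 ≤ (if a ∈ Q then f Q else 0) := by
    intro a _
    split_ifs
    exacts [hf Q, le_rfl]
  split_ifs with h
  · obtain ⟨a, ha⟩ := h
    rw [Finset.mem_inter] at ha
    simpa [ha.2] using Finset.single_le_sum hnn ha.1
  · exact Finset.sum_nonneg hnn

/-- For `S = ∅` both distances take the junk value `0`, and the bound still holds. -/
lemma infDist_le_setDist_union {Λ : Type*} [Fintype Λ] [DecidableEq Λ] [MetricSpace Λ]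
    (Q R S : Finset Λ) (p : Λ) (hp : p ∈ Q) (hQR : (Q ∩ R).Nonempty) :
    Metric.infDist p (S : Set Λ) ≤ Metric.diam (Q : Set Λ) + Metric.diam (R : Set Λ) +
      setDist ((Q ∪ R : Finset Λ) : Set Λ) (S : Set Λ) := by
  have hdQ : 0 ≤ Metric.diam (Q : Set Λ) := Metric.diam_nonneg
  have hdR : 0 ≤ Metric.diam (R : Set Λ) := Metric.diam_nonneg
  rcases S.eq_empty_or_nonempty with rfl | hS
  · simp only [setDist, Finset.coe_empty, Set.image2_empty_right, Real.sInf_empty,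
      Metric.infDist_empty]
    positivity
  have hbd : ∀ X : Finset Λ, Bornology.IsBounded (X : Set Λ) :=
    fun X => X.finite_toSet.isBounded
  obtain ⟨q, hq⟩ := hQR
  rw [Finset.mem_inter] at hq
  have key : Metric.infDist p (S : Set Λ) -
      (Metric.diam (Q : Set Λ) + Metric.diam (R : Set Λ)) ≤
        setDist ((Q ∪ R : Finset Λ) : Set Λ) (S : Set Λ) := by
    refine le_csInf (Set.Nonempty.image2 ⟨p, by simp [hp]⟩ (by simpa using hS)) ?_
    rintro _ ⟨u, hu, s, hs, rfl⟩
    have h1 : Metric.infDist p (S : Set Λ) ≤ dist p s := Metric.infDist_le_dist_of_mem hs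
    have h2 := dist_triangle p u s
    have h3 : dist p u ≤ Metric.diam (Q : Set Λ) + Metric.diam (R : Set Λ) := by
      rcases Finset.mem_union.1 (Finset.mem_coe.1 hu) with h | h
      · have := Metric.dist_le_diam_of_mem (hbd Q) (Finset.mem_coe.2 hp) (Finset.mem_coe.2 h)
        linarith
      · have h4 := Metric.dist_le_diam_of_mem (hbd Q) (Finset.mem_coe.2 hp)
          (Finset.mem_coe.2 hq.1)
        have h5 := Metric.dist_le_diam_of_mem (hbd R) (Finset.mem_coe.2 hq.2)
          (Finset.mem_coe.2 h)
        have := dist_triangle p q u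
        linarith
    linarith
  linarith

lemma card_union_le_two_mul {Λ : Type*} [DecidableEq Λ] (Q R : Finset Λ)
    (hQR : (Q ∩ R).Nonempty) :
    ((Q ∪ R).card : ℝ) ≤ 2 * Q.card * (R.card : ℝ) ^ 2 := by
  have hQ : 1 ≤ Q.card := (hQR.mono Finset.inter_subset_left).card_pos
  have hR : 1 ≤ R.card := (hQR.mono Finset.inter_subset_right).card_pos
  have h := Finset.card_union_le Q R
  have : (Q ∪ R).card ≤ 2 * Q.card * R.card ^ 2 := by
    have h1 : R.card ≤ R.card ^ 2 := Nat.le_self_pow two_ne_zero _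
    have h2 : Q.card + R.card ≤ 2 * (Q.card * R.card) := by nlinarith
    have h3 : Q.card * R.card ≤ Q.card * R.card ^ 2 := Nat.mul_le_mul_left _ h1
    linarith
  exact_mod_cast this

/-- **Branching-sum estimate:** if `Σ_{Q∋x} w(Q)|Q|²e^{μ·diam Q} ≤ ζ` for all `x`, then
`Σ_{Q,R : P∼Q∼R} |Q∪R|·w(Q)w(R)·e^{−μ·dist(Q∪R,S)} ≤ 2ζ²·Σ_{p∈P} e^{−μ·dist(p,S)}`. -/
theorem branching_sum_estimate
    (w : Finset Λ → ℝ) (hw : ∀ Q, 0 ≤ w Q)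
    (μ ζ : ℝ) (hμ : 0 < μ) (hζ : 0 < ζ)
    (hdecay : ∀ x : Λ, ∑ Q ∈ Finset.univ.filter (fun Q : Finset Λ => x ∈ Q),
        w Q * (Q.card : ℝ) ^ 2 * Real.exp (μ * Metric.diam (Q : Set Λ)) ≤ ζ)
    (P S : Finset Λ) :
    ∑ Q ∈ Finset.univ.filter (fun Q : Finset Λ => (P ∩ Q).Nonempty),
      ∑ R ∈ Finset.univ.filter (fun R : Finset Λ => (Q ∩ R).Nonempty),
        ((Q ∪ R).card : ℝ) * w Q * w R *
          Real.exp (-μ * setDist ((Q ∪ R : Finset Λ) : Set Λ) (S : Set Λ)) ≤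
      2 * ζ ^ 2 * ∑ p ∈ P, Real.exp (-μ * Metric.infDist p (S : Set Λ)) := by
  -- The weight whose sum over sets through a site is at most `ζ`.
  set g : Finset Λ → ℝ := fun Q =>
    w Q * (Q.card : ℝ) ^ 2 * Real.exp (μ * Metric.diam (Q : Set Λ)) with hg
  have hg0 : ∀ Q, 0 ≤ g Q := fun Q =>
    mul_nonneg (mul_nonneg (hw Q) (by positivity)) (Real.exp_pos _).le
  have hinner : ∀ Q : Finset Λ,
      ∑ R ∈ Finset.univ.filter (fun R : Finset Λ => (Q ∩ R).Nonempty), g R ≤ Q.card * ζ := by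
    intro Q
    refine (sum_meeting_le Q g hg0).trans ?_
    simpa using Finset.sum_le_card_nsmul Q _ ζ fun q _ => hdecay q
  have hterm0 : ∀ Q R : Finset Λ, 0 ≤ ((Q ∪ R).card : ℝ) * w Q * w R *
      Real.exp (-μ * setDist ((Q ∪ R : Finset Λ) : Set Λ) (S : Set Λ)) := fun Q R =>
    mul_nonneg (mul_nonneg (mul_nonneg (by positivity) (hw Q)) (hw R)) (Real.exp_pos _).le
  refine (sum_meeting_le P _ fun Q => Finset.sum_nonneg fun R _ => hterm0 Q R).trans ?_
  rw [Finset.mul_sum]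
  refine Finset.sum_le_sum fun p _ => ?_
  set E := Real.exp (-μ * Metric.infDist p (S : Set Λ)) with hE
  have hE0 : 0 < E := Real.exp_pos _
  have hQ : ∀ Q ∈ Finset.univ.filter (fun Q : Finset Λ => p ∈ Q),
      ∑ R ∈ Finset.univ.filter (fun R : Finset Λ => (Q ∩ R).Nonempty),
        ((Q ∪ R).card : ℝ) * w Q * w R *
          Real.exp (-μ * setDist ((Q ∪ R : Finset Λ) : Set Λ) (S : Set Λ)) ≤
        2 * ζ * E * g Q := by
    intro Q hpQ
    have hpQ : p ∈ Q := (Finset.mem_filter.1 hpQ).2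
    set c : ℝ := 2 * E * Q.card * w Q * Real.exp (μ * Metric.diam (Q : Set Λ)) with hc
    have hc0 : 0 ≤ c :=
      mul_nonneg (mul_nonneg (by positivity) (hw Q)) (Real.exp_pos _).le
    calc _ ≤ ∑ R ∈ Finset.univ.filter (fun R : Finset Λ => (Q ∩ R).Nonempty), c * g R := by
          refine Finset.sum_le_sum fun R hR => ?_
          have hQR : (Q ∩ R).Nonempty := (Finset.mem_filter.1 hR).2
          have hexp : Real.exp (-μ * setDist ((Q ∪ R : Finset Λ) : Set Λ) (S : Set Λ)) ≤
              E * Real.exp (μ * Metric.diam (Q : Set Λ)) *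
                Real.exp (μ * Metric.diam (R : Set Λ)) := by
            rw [hE, ← Real.exp_add, ← Real.exp_add, Real.exp_le_exp]
            have := mul_le_mul_of_nonneg_left
              (infDist_le_setDist_union Q R S p hpQ hQR) hμ.le
            linarith
          have hww : 0 ≤ w Q * w R := mul_nonneg (hw Q) (hw R)
          calc _ = ((Q ∪ R).card : ℝ) * (w Q * w R) *
                Real.exp (-μ * setDist ((Q ∪ R : Finset Λ) : Set Λ) (S : Set Λ)) := by ring
            _ ≤ (2 * Q.card * (R.card : ℝ) ^ 2) * (w Q * w R) *
                (E * Real.exp (μ * Metric.diam (Q : Set Λ)) *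
                  Real.exp (μ * Metric.diam (R : Set Λ))) :=
              mul_le_mul
                (mul_le_mul_of_nonneg_right (card_union_le_two_mul Q R hQR) hww)
                hexp (Real.exp_pos _).le (mul_nonneg (by positivity) hww)
            _ = c * g R := by simp only [hc, hg]; ring
      _ ≤ c * (Q.card * ζ) := by
          rw [← Finset.mul_sum]
          exact mul_le_mul_of_nonneg_left (hinner Q) hc0
      _ = 2 * ζ * E * g Q := by simp only [hc, hg]; ring
  calc _ ≤ ∑ Q ∈ Finset.univ.filter (fun Q : Finset Λ => p ∈ Q), 2 * ζ * E * g Q :=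
        Finset.sum_le_sum hQ
    _ ≤ 2 * ζ * E * ζ := by
        rw [← Finset.mul_sum]
        exact mul_le_mul_of_nonneg_left (hdecay p) (by positivity)
    _ = 2 * ζ ^ 2 * E := by ring

end SetSums
end
end

section
/- Let L ⊂ ℝ³ be the (body-centered cubic) lattice generated over ℤ by the vectors (2,0,0), (0,2,0), and (1,1,1), and color each lattice point p = (x,y,z) ∈ L by c(p) = x + y + z mod 4. Then: (a) any two distinct points of L with the same color are at Euclidean distance at least 2√2; and (b) every point of ℝ³ is within Euclidean distance √5/2 of some point of L (so each Voronoi cell of L is contained in a closed ball of radius √5/2 about its center). -/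
/-!
(a) If two lattice points have the same color, their difference `(2a+c, 2b+c, c)` satisfies
`4 ∣ 2a + 2b + 3c`. Hence `c` is even and the difference is `2 • (u, v, w)` with integers `u, v, w`
of even sum. Then `u² + v² + w²` is even, and positive for distinct points, so it is at least `2`
(`eight_le_of_color`).

(b) The lattice is `(2ℤ)³ ∪ (2ℤ+1)³`. For each coordinate of a point let `s ∈ [0, 1]` be its
distance to `2ℤ`; its distance to `2ℤ+1` is then `1 - s` (`exists_even_odd`). So the squared
distances to the two cosets are `∑ s²` and `∑ (1 - s)²`. By the symmetry `s ↦ 1 - s` one may assume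
`∑ s ≤ 3/2`, and on that part of the unit cube the convex function `∑ s²` has maximum `5/4`,
attained at the permutations of `(1, 1/2, 0)` (`sum_sq_le`).
-/

noncomputable section

namespace BCC

/-- A point of Euclidean `ℝ³` with the given coordinates. -/
def vec (x y z : ℝ) : EuclideanSpace ℝ (Fin 3) :=
  (WithLp.equiv 2 (Fin 3 → ℝ)).symm ![x, y, z]

/-- The point of the BCC lattice with coefficients `a, b, c` over the basis
`(2,0,0), (0,2,0), (1,1,1)`. -/
def pt (a b c : ℤ) : EuclideanSpace ℝ (Fin 3) :=
  (a : ℝ) • vec 2 0 0 + (b : ℝ) • vec 0 2 0 + (c : ℝ) • vec 1 1 1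

/-- The body-centered cubic lattice generated by `(2,0,0)`, `(0,2,0)`, `(1,1,1)`. -/
def lattice : Set (EuclideanSpace ℝ (Fin 3)) := {p | ∃ a b c : ℤ, p = pt a b c}

/-- The coordinate sum `x + y + z` of `pt a b c = (2a+c, 2b+c, c)` is `2a + 2b + 3c`;
the color of the lattice point is its residue mod 4. -/
def color (a b c : ℤ) : ℤ := (2 * a + 2 * b + 3 * c) % 4

theorem dist_eq_sqrt (x y : EuclideanSpace ℝ (Fin 3)) :
    dist x y = Real.sqrt ((x 0 - y 0) ^ 2 + (x 1 - y 1) ^ 2 + (x 2 - y 2) ^ 2) := by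
  simp [EuclideanSpace.dist_eq, Fin.sum_univ_three, Real.dist_eq, sq_abs]

theorem pt_zero (a b c : ℤ) : pt a b c 0 = 2 * a + c := by
  simp [pt, vec]; ring

theorem pt_one (a b c : ℤ) : pt a b c 1 = 2 * b + c := by
  simp [pt, vec]; ring

theorem pt_two (a b c : ℤ) : pt a b c 2 = c := by
  simp [pt, vec]

/-- The squared minimum distance within a color class, in terms of the coefficients of the
difference vector. -/
theorem eight_le_of_color (a b c : ℤ) (h : 4 ∣ 2 * a + 2 * b + 3 * c)
    (h0 : ¬(a = 0 ∧ b = 0 ∧ c = 0)) :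
    8 ≤ (2 * a + c) ^ 2 + (2 * b + c) ^ 2 + c ^ 2 := by
  obtain ⟨w, rfl⟩ : ∃ w, c = 2 * w := ⟨c / 2, by omega⟩
  obtain ⟨u, rfl⟩ : ∃ u, a = u - w := ⟨a + w, by ring⟩
  obtain ⟨v, rfl⟩ : ∃ v, b = v - w := ⟨b + w, by ring⟩
  obtain ⟨k, hk⟩ : ∃ k, u + v + w = 2 * k := ⟨(u + v + w) / 2, by omega⟩
  -- The square sum is `(u + v + w)² - 2(uv + vw + wu)`, hence even.
  have heven : u ^ 2 + v ^ 2 + w ^ 2 = 2 * (2 * k ^ 2 - (u * v + v * w + w * u)) := by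
    linear_combination (u + v + w + 2 * k) * hk
  have hpos : 0 < u ^ 2 + v ^ 2 + w ^ 2 := by
    by_contra hn
    have hu : u = 0 := by
      apply pow_eq_zero_iff (two_ne_zero) |>.1
      nlinarith [sq_nonneg u, sq_nonneg v, sq_nonneg w]
    have hv : v = 0 := by
      apply pow_eq_zero_iff (two_ne_zero) |>.1
      nlinarith [sq_nonneg u, sq_nonneg v, sq_nonneg w]
    have hw : w = 0 := by
      apply pow_eq_zero_iff (two_ne_zero) |>.1
      nlinarith [sq_nonneg u, sq_nonneg v, sq_nonneg w]
    exact h0 (by omega)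
  have h2 : 2 ≤ u ^ 2 + v ^ 2 + w ^ 2 := by omega
  linarith

/-- A real number at distance `s` from `2ℤ` is at distance `1 - s` from `2ℤ + 1`. -/
theorem exists_even_odd (t : ℝ) : ∃ (n m : ℤ) (s : ℝ), 0 ≤ s ∧ s ≤ 1 ∧
    (t - 2 * n) ^ 2 = s ^ 2 ∧ (t - (2 * m + 1)) ^ 2 = (1 - s) ^ 2 := by
  have h0 := Int.floor_le t
  have h1 := (Int.lt_floor_add_one t).le
  rcases Int.even_or_odd' ⌊t⌋ with ⟨k, hk | hk⟩
  · rw [hk] at h0 h1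
    push_cast at h0 h1
    exact ⟨k, k, t - 2 * k, by linarith, by linarith, by ring, by ring⟩
  · rw [hk] at h0 h1
    push_cast at h0 h1
    exact ⟨k + 1, k, 2 * k + 2 - t, by linarith, by linarith, by push_cast; ring, by ring⟩

/-- Each square is bounded by a chord: of `[0, 1/2]`, `[1/2, 1]` or `[0, 1]`, according to how
many of the three numbers exceed `1/2`. -/
theorem sum_sq_le (x y z : ℝ) (hx : 0 ≤ x) (hx' : x ≤ 1) (hy : 0 ≤ y) (hy' : y ≤ 1)
    (hz : 0 ≤ z) (hz' : z ≤ 1) (h : x + y + z ≤ 3 / 2) :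
    x ^ 2 + y ^ 2 + z ^ 2 ≤ 5 / 4 := by
  have chord01 : ∀ t : ℝ, 0 ≤ t → t ≤ 1 → t ^ 2 ≤ t := fun t h0 h1 => by nlinarith
  have chordLow : ∀ t : ℝ, 0 ≤ t → t ≤ 1 / 2 → t ^ 2 ≤ t / 2 := fun t h0 h1 => by nlinarith
  have chordHigh : ∀ t : ℝ, 1 / 2 ≤ t → t ≤ 1 → t ^ 2 ≤ 3 / 2 * t - 1 / 2 :=
    fun t h0 h1 => by nlinarith
  have ax := chord01 x hx hx'
  have ay := chord01 y hy hy'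
  have az := chord01 z hz hz'
  rcases le_total x (1 / 2) with cx | cx <;> rcases le_total y (1 / 2) with cy | cy <;>
    rcases le_total z (1 / 2) with cz | cz <;>
    first
    | have bx := chordLow x hx cx
    | have bx := chordHigh x cx hx'
  all_goals
    first
    | have bY := chordLow y hy cy
    | have bY := chordHigh y cy hy'
  all_goals
    first
    | have bz := chordLow z hz cz
    | have bz := chordHigh z cz hz'
  all_goals linarith

/-- **BCC 4-coloring.** Coloring each BCC lattice point `p = (x,y,z)` by
`x + y + z mod 4`: (a) any two distinct lattice points of the same color are at Euclidean
distance at least `2√2`; (b) every point of `ℝ³` is within distance `√5/2` of a lattice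
point. -/
theorem bcc_coloring :
    (∀ a b c a' b' c' : ℤ, color a b c = color a' b' c' →
      pt a b c ≠ pt a' b' c' → 2 * Real.sqrt 2 ≤ dist (pt a b c) (pt a' b' c')) ∧
    (∀ x : EuclideanSpace ℝ (Fin 3), ∃ p ∈ lattice, dist x p ≤ Real.sqrt 5 / 2) := by
  constructor
  · intro a b c a' b' c' hcol hne
    have hdvd : 4 ∣ 2 * (a - a') + 2 * (b - b') + 3 * (c - c') := by
      unfold color at hcol
      omega
    have hnz : ¬(a - a' = 0 ∧ b - b' = 0 ∧ c - c' = 0) := by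
      rintro ⟨h1, h2, h3⟩
      rw [sub_eq_zero] at h1 h2 h3
      exact hne (by rw [h1, h2, h3])
    have h8 := eight_le_of_color _ _ _ hdvd hnz
    have h8' : (8 : ℝ) ≤ (2 * (a - a') + (c - c')) ^ 2 + (2 * (b - b') + (c - c')) ^ 2
        + (c - c') ^ 2 := by exact_mod_cast h8
    rw [dist_eq_sqrt]
    simp only [pt_zero, pt_one, pt_two]
    apply Real.le_sqrt_of_sq_le
    rw [mul_pow, Real.sq_sqrt (by norm_num)]
    linarith
  · intro x
    obtain ⟨n₀, m₀, s₀, h0, h0', e0, o0⟩ := exists_even_odd (x 0)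
    obtain ⟨n₁, m₁, s₁, h1, h1', e1, o1⟩ := exists_even_odd (x 1)
    obtain ⟨n₂, m₂, s₂, h2, h2', e2, o2⟩ := exists_even_odd (x 2)
    have key : ∀ p : EuclideanSpace ℝ (Fin 3),
        (x 0 - p 0) ^ 2 + (x 1 - p 1) ^ 2 + (x 2 - p 2) ^ 2 ≤ 5 / 4 →
        dist x p ≤ Real.sqrt 5 / 2 := by
      intro p hp
      rw [dist_eq_sqrt]
      apply Real.sqrt_le_iff.2 ⟨by positivity, ?_⟩
      rw [div_pow, Real.sq_sqrt (by norm_num)]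
      linarith
    rcases le_total (s₀ + s₁ + s₂) (3 / 2) with hs | hs
    · -- The lattice point is `(2n₀, 2n₁, 2n₂)`.
      refine ⟨pt (n₀ - n₂) (n₁ - n₂) (2 * n₂), ⟨_, _, _, rfl⟩, key _ ?_⟩
      have hb := sum_sq_le s₀ s₁ s₂ h0 h0' h1 h1' h2 h2' hs
      rw [← e0, ← e1, ← e2] at hb
      simp only [pt_zero, pt_one, pt_two]
      push_cast
      linarith
    · -- The lattice point is `(2m₀ + 1, 2m₁ + 1, 2m₂ + 1)`.
      refine ⟨pt (m₀ - m₂) (m₁ - m₂) (2 * m₂ + 1), ⟨_, _, _, rfl⟩, key _ ?_⟩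
      have hb := sum_sq_le (1 - s₀) (1 - s₁) (1 - s₂) (by linarith) (by linarith) (by linarith)
        (by linarith) (by linarith) (by linarith) (by linarith)
      rw [← o0, ← o1, ← o2] at hb
      simp only [pt_zero, pt_one, pt_two]
      push_cast
      linarith

end BCC
end
end
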